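/- arXiv:2402.08861 — 9 statements merged into one kernel-verified Lean document; each statement's English description precedes it below -/
import Mathlib

section
/- For any two distinct indices i, j ∈ {1,2,3,4}, setting h_σ(i,j) := ⁅e_σ(i,j), f_σ(i,j)⁆, the elements (e_σ(i,j), h_σ(i,j), f_σ(i,j)) form an sl₂-triple; that is, ⁅h_σ(i,j), e_σ(i,j)⁆ = 2 • e_σ(i,j) and ⁅h_σ(i,j), f_σ(i,j)⁆ = (-2) • f_σ(i,j). -/
/-- CONTEXT: Lie algebra over ℂ with sl₂-triples (e i, h, f i), i ∈ {1,2,3,4}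
(encoded as Fin 4), the operators K i j := ⁅e i, f j⁆ satisfying the Verbitsky
relations, and the classes e_σ(i,j), f_σ(i,j), e_σ̄(i,j), f_σ̄(i,j). -/
theorem stmt0 {L : Type*} [LieRing L] [LieAlgebra ℂ L]
    (h : L) (e f : Fin 4 → L)
    (hhe : ∀ i, ⁅h, e i⁆ = (2 : ℂ) • e i)
    (hhf : ∀ i, ⁅h, f i⁆ = (-2 : ℂ) • f i)
    (hef : ∀ i, ⁅e i, f i⁆ = h)
    (K : Fin 4 → Fin 4 → L)
    (hKdef : ∀ i j, i ≠ j → K i j = ⁅e i, f j⁆)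
    (hKskew : ∀ i j, i ≠ j → K i j = -K j i)
    (hKK : ∀ i j k, i ≠ j → j ≠ k → i ≠ k → ⁅K i j, K j k⁆ = (2 : ℂ) • K i k)
    (hKh : ∀ i j, i ≠ j → ⁅K i j, h⁆ = 0)
    (hKe : ∀ i j, i ≠ j → ⁅K i j, e j⁆ = (2 : ℂ) • e i)
    (hKf : ∀ i j, i ≠ j → ⁅K i j, f j⁆ = (2 : ℂ) • f i)
    (hKe0 : ∀ i j k, i ≠ j → j ≠ k → i ≠ k → ⁅K i j, e k⁆ = 0)
    (hKf0 : ∀ i j k, i ≠ j → j ≠ k → i ≠ k → ⁅K i j, f k⁆ = 0)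
    (eσ fσ eσc fσc : Fin 4 → Fin 4 → L)
    (heσ : ∀ i j, i ≠ j → eσ i j = ((1 : ℂ)/2) • (e i + Complex.I • e j))
    (hfσ : ∀ i j, i ≠ j → fσ i j = ((1 : ℂ)/2) • (f i - Complex.I • f j))
    (heσc : ∀ i j, i ≠ j → eσc i j = ((1 : ℂ)/2) • (e i - Complex.I • e j))
    (hfσc : ∀ i j, i ≠ j → fσc i j = ((1 : ℂ)/2) • (f i + Complex.I • f j)) :
    ∀ i j : Fin 4, i ≠ j →
      ⁅⁅eσ i j, fσ i j⁆, eσ i j⁆ = (2 : ℂ) • eσ i j ∧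
      ⁅⁅eσ i j, fσ i j⁆, fσ i j⁆ = (-2 : ℂ) • fσ i j := by
  intro i j hij
  have k1 : ⁅e i, f j⁆ = K i j := (hKdef i j hij).symm
  have k2 : ⁅e j, f i⁆ = -K i j := by
    rw [← hKdef j i hij.symm, hKskew j i hij.symm]
  have a1 := hKe i j hij
  have a2 : ⁅K i j, e i⁆ = -((2 : ℂ) • e j) := by
    rw [hKskew i j hij, neg_lie, hKe j i hij.symm]
  have b1 := hKf i j hij
  have b2 : ⁅K i j, f i⁆ = -((2 : ℂ) • f j) := by
    rw [hKskew i j hij, neg_lie, hKf j i hij.symm]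
  have hI : Complex.I * Complex.I = -1 := Complex.I_mul_I
  have H : ⁅eσ i j, fσ i j⁆ = ((1 : ℂ)/2) • (h - Complex.I • K i j) := by
    rw [heσ i j hij, hfσ i j hij]
    simp only [smul_lie, lie_smul, add_lie, lie_sub, hef, k1, k2]
    match_scalars
    · linear_combination (-(1 : ℂ)/4) * hI
    · ring
  rw [H, heσ i j hij, hfσ i j hij]
  constructor
  · simp only [smul_lie, lie_smul, sub_lie, lie_add, hhe, a1, a2]
    match_scalars
    · linear_combination (-(1 : ℂ)/2) * hI
    · ring
  · simp only [smul_lie, lie_smul, sub_lie, lie_sub, hhf, b1, b2]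
    match_scalars
    · linear_combination ((1 : ℂ)/2) * hI
    · ring
end

section
/- For any two distinct indices i, j ∈ {1,2,3,4}, setting h_σ̄(i,j) := ⁅e_σ̄(i,j), f_σ̄(i,j)⁆, the elements (e_σ̄(i,j), h_σ̄(i,j), f_σ̄(i,j)) form an sl₂-triple; that is, ⁅h_σ̄(i,j), e_σ̄(i,j)⁆ = 2 • e_σ̄(i,j) and ⁅h_σ̄(i,j), f_σ̄(i,j)⁆ = (-2) • f_σ̄(i,j). -/
/-- CONTEXT: Lie algebra over ℂ with sl₂-triples (e i, h, f i), i ∈ {1,2,3,4}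
(encoded as Fin 4), the operators K i j := ⁅e i, f j⁆ satisfying the Verbitsky
relations, and the classes e_σ(i,j), f_σ(i,j), e_σ̄(i,j), f_σ̄(i,j). -/
theorem stmt1 {L : Type*} [LieRing L] [LieAlgebra ℂ L]
    (h : L) (e f : Fin 4 → L)
    (hhe : ∀ i, ⁅h, e i⁆ = (2 : ℂ) • e i)
    (hhf : ∀ i, ⁅h, f i⁆ = (-2 : ℂ) • f i)
    (hef : ∀ i, ⁅e i, f i⁆ = h)
    (K : Fin 4 → Fin 4 → L)
    (hKdef : ∀ i j, i ≠ j → K i j = ⁅e i, f j⁆)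
    (hKskew : ∀ i j, i ≠ j → K i j = -K j i)
    (hKK : ∀ i j k, i ≠ j → j ≠ k → i ≠ k → ⁅K i j, K j k⁆ = (2 : ℂ) • K i k)
    (hKh : ∀ i j, i ≠ j → ⁅K i j, h⁆ = 0)
    (hKe : ∀ i j, i ≠ j → ⁅K i j, e j⁆ = (2 : ℂ) • e i)
    (hKf : ∀ i j, i ≠ j → ⁅K i j, f j⁆ = (2 : ℂ) • f i)
    (hKe0 : ∀ i j k, i ≠ j → j ≠ k → i ≠ k → ⁅K i j, e k⁆ = 0)
    (hKf0 : ∀ i j k, i ≠ j → j ≠ k → i ≠ k → ⁅K i j, f k⁆ = 0)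
    (eσ fσ eσc fσc : Fin 4 → Fin 4 → L)
    (heσ : ∀ i j, i ≠ j → eσ i j = ((1 : ℂ)/2) • (e i + Complex.I • e j))
    (hfσ : ∀ i j, i ≠ j → fσ i j = ((1 : ℂ)/2) • (f i - Complex.I • f j))
    (heσc : ∀ i j, i ≠ j → eσc i j = ((1 : ℂ)/2) • (e i - Complex.I • e j))
    (hfσc : ∀ i j, i ≠ j → fσc i j = ((1 : ℂ)/2) • (f i + Complex.I • f j)) :
    ∀ i j : Fin 4, i ≠ j →
      ⁅⁅eσc i j, fσc i j⁆, eσc i j⁆ = (2 : ℂ) • eσc i j ∧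
      ⁅⁅eσc i j, fσc i j⁆, fσc i j⁆ = (-2 : ℂ) • fσc i j := by
  intro i j hij
  have hK1 : ⁅e i, f j⁆ = K i j := (hKdef i j hij).symm
  have hK2 : ⁅e j, f i⁆ = -K i j := by
    rw [← hKdef j i hij.symm, hKskew j i hij.symm]
  have he : ⁅K i j, e i⁆ = (-2 : ℂ) • e j := by
    rw [hKskew i j hij, neg_lie, hKe j i hij.symm, neg_smul]
  have hf : ⁅K i j, f i⁆ = (-2 : ℂ) • f j := by
    rw [hKskew i j hij, neg_lie, hKf j i hij.symm, neg_smul]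
  have hH : ⁅eσc i j, fσc i j⁆ = ((1 : ℂ)/2) • (h + Complex.I • K i j) := by
    rw [heσc i j hij, hfσc i j hij]
    simp only [smul_lie, lie_smul, sub_lie, lie_add, hef, hK1, hK2]
    match_scalars <;> ring_nf <;> simp [Complex.I_sq] <;> norm_num
  rw [hH, heσc i j hij, hfσc i j hij]
  constructor
  · simp only [smul_lie, lie_smul, add_lie, lie_sub, hhe, he, hKe i j hij]
    match_scalars <;> ring_nf <;> simp [Complex.I_sq] <;> norm_num
  · simp only [smul_lie, lie_smul, add_lie, lie_add, hhf, hf, hKf i j hij]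
    match_scalars <;> ring_nf <;> simp [Complex.I_sq] <;> norm_num
end

section
/- For any two distinct indices i, j ∈ {1,2,3,4}, one has ⁅e_σ(i,j), f_σ̄(i,j)⁆ = 0 and ⁅e_σ̄(i,j), f_σ(i,j)⁆ = 0. -/
/-- CONTEXT: Lie algebra over ℂ with sl₂-triples (e i, h, f i), i ∈ {1,2,3,4}
(encoded as Fin 4), the operators K i j := ⁅e i, f j⁆ satisfying the Verbitsky
relations, and the classes e_σ(i,j), f_σ(i,j), e_σ̄(i,j), f_σ̄(i,j). -/
theorem stmt2 {L : Type*} [LieRing L] [LieAlgebra ℂ L]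
    (h : L) (e f : Fin 4 → L)
    (hhe : ∀ i, ⁅h, e i⁆ = (2 : ℂ) • e i)
    (hhf : ∀ i, ⁅h, f i⁆ = (-2 : ℂ) • f i)
    (hef : ∀ i, ⁅e i, f i⁆ = h)
    (K : Fin 4 → Fin 4 → L)
    (hKdef : ∀ i j, i ≠ j → K i j = ⁅e i, f j⁆)
    (hKskew : ∀ i j, i ≠ j → K i j = -K j i)
    (hKK : ∀ i j k, i ≠ j → j ≠ k → i ≠ k → ⁅K i j, K j k⁆ = (2 : ℂ) • K i k)
    (hKh : ∀ i j, i ≠ j → ⁅K i j, h⁆ = 0)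
    (hKe : ∀ i j, i ≠ j → ⁅K i j, e j⁆ = (2 : ℂ) • e i)
    (hKf : ∀ i j, i ≠ j → ⁅K i j, f j⁆ = (2 : ℂ) • f i)
    (hKe0 : ∀ i j k, i ≠ j → j ≠ k → i ≠ k → ⁅K i j, e k⁆ = 0)
    (hKf0 : ∀ i j k, i ≠ j → j ≠ k → i ≠ k → ⁅K i j, f k⁆ = 0)
    (eσ fσ eσc fσc : Fin 4 → Fin 4 → L)
    (heσ : ∀ i j, i ≠ j → eσ i j = ((1 : ℂ)/2) • (e i + Complex.I • e j))
    (hfσ : ∀ i j, i ≠ j → fσ i j = ((1 : ℂ)/2) • (f i - Complex.I • f j))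
    (heσc : ∀ i j, i ≠ j → eσc i j = ((1 : ℂ)/2) • (e i - Complex.I • e j))
    (hfσc : ∀ i j, i ≠ j → fσc i j = ((1 : ℂ)/2) • (f i + Complex.I • f j)) :
    ∀ i j : Fin 4, i ≠ j →
      ⁅eσ i j, fσc i j⁆ = 0 ∧ ⁅eσc i j, fσ i j⁆ = 0 := by
  intro i j hij
  have h1 : ⁅e i, f j⁆ = -⁅e j, f i⁆ := by
    rw [← hKdef i j hij, ← hKdef j i hij.symm]
    exact hKskew i j hij
  rw [heσ i j hij, hfσ i j hij, heσc i j hij, hfσc i j hij]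
  constructor
  · simp only [smul_lie, lie_smul, add_lie, lie_add, hef, h1, smul_add, smul_smul]
    match_scalars <;> ring_nf <;> simp [Complex.I_sq]
  · simp only [smul_lie, lie_smul, sub_lie, lie_sub, hef, h1, smul_sub, smul_smul]
    match_scalars <;> ring_nf <;> simp [Complex.I_sq]
end

section
/- Set L₀ := ⁅e_σ(1,2), f_σ(3,4)⁆, Λ₀ := ⁅e_σ(3,4), f_σ(1,2)⁆, and H₀ := ⁅L₀, Λ₀⁆. Then (L₀, H₀, Λ₀) form an sl₂-triple; that is, ⁅H₀, L₀⁆ = 2 • L₀ and ⁅H₀, Λ₀⁆ = (-2) • Λ₀. -/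
/-- CONTEXT: Lie algebra over ℂ with sl₂-triples (e i, h, f i), i ∈ {1,2,3,4}
(encoded as Fin 4), the operators K i j := ⁅e i, f j⁆ satisfying the Verbitsky
relations, and the classes e_σ(i,j), f_σ(i,j), e_σ̄(i,j), f_σ̄(i,j). -/
theorem stmt3 {L : Type*} [LieRing L] [LieAlgebra ℂ L]
    (h : L) (e f : Fin 4 → L)
    (hhe : ∀ i, ⁅h, e i⁆ = (2 : ℂ) • e i)
    (hhf : ∀ i, ⁅h, f i⁆ = (-2 : ℂ) • f i)
    (hef : ∀ i, ⁅e i, f i⁆ = h)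
    (K : Fin 4 → Fin 4 → L)
    (hKdef : ∀ i j, i ≠ j → K i j = ⁅e i, f j⁆)
    (hKskew : ∀ i j, i ≠ j → K i j = -K j i)
    (hKK : ∀ i j k, i ≠ j → j ≠ k → i ≠ k → ⁅K i j, K j k⁆ = (2 : ℂ) • K i k)
    (hKh : ∀ i j, i ≠ j → ⁅K i j, h⁆ = 0)
    (hKe : ∀ i j, i ≠ j → ⁅K i j, e j⁆ = (2 : ℂ) • e i)
    (hKf : ∀ i j, i ≠ j → ⁅K i j, f j⁆ = (2 : ℂ) • f i)
    (hKe0 : ∀ i j k, i ≠ j → j ≠ k → i ≠ k → ⁅K i j, e k⁆ = 0)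
    (hKf0 : ∀ i j k, i ≠ j → j ≠ k → i ≠ k → ⁅K i j, f k⁆ = 0)
    (eσ fσ eσc fσc : Fin 4 → Fin 4 → L)
    (heσ : ∀ i j, i ≠ j → eσ i j = ((1 : ℂ)/2) • (e i + Complex.I • e j))
    (hfσ : ∀ i j, i ≠ j → fσ i j = ((1 : ℂ)/2) • (f i - Complex.I • f j))
    (heσc : ∀ i j, i ≠ j → eσc i j = ((1 : ℂ)/2) • (e i - Complex.I • e j))
    (hfσc : ∀ i j, i ≠ j → fσc i j = ((1 : ℂ)/2) • (f i + Complex.I • f j)) :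
    ⁅⁅⁅eσ 0 1, fσ 2 3⁆, ⁅eσ 2 3, fσ 0 1⁆⁆, ⁅eσ 0 1, fσ 2 3⁆⁆ =
        (2 : ℂ) • ⁅eσ 0 1, fσ 2 3⁆ ∧
      ⁅⁅⁅eσ 0 1, fσ 2 3⁆, ⁅eσ 2 3, fσ 0 1⁆⁆, ⁅eσ 2 3, fσ 0 1⁆⁆ =
        (-2 : ℂ) • ⁅eσ 2 3, fσ 0 1⁆ := by
  have gen : ∀ i j k, i ≠ j → j ≠ k → i ≠ k →
      ⁅K i j, K i k⁆ = (-2 : ℂ) • K j k := by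
    intro i j k a b c
    rw [hKskew i j a, neg_lie, hKK j i k a.symm c b]; module
  have gen2 : ∀ i j k, i ≠ j → j ≠ k → i ≠ k →
      ⁅K i k, K j k⁆ = (-2 : ℂ) • K i j := by
    intro i j k a b c
    rw [hKskew j k b, lie_neg, hKK i k j c b.symm a]; module
  have disj : ∀ i j k l, i ≠ j → k ≠ l → i ≠ k → i ≠ l → j ≠ k → j ≠ l →
      ⁅K i j, K k l⁆ = 0 := by
    intro i j k l a b c d m n
    rw [hKdef k l b, leibniz_lie, hKe0 i j k a m c, hKf0 i j l a n d]; simp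
  have ab := gen 0 2 3 (by decide) (by decide) (by decide)
  have cd := gen 1 2 3 (by decide) (by decide) (by decide)
  have pa := gen 0 1 2 (by decide) (by decide) (by decide)
  have pb := gen 0 1 3 (by decide) (by decide) (by decide)
  have ac := gen2 0 1 2 (by decide) (by decide) (by decide)
  have bd := gen2 0 1 3 (by decide) (by decide) (by decide)
  have pc := hKK 0 1 2 (by decide) (by decide) (by decide)
  have pd := hKK 0 1 3 (by decide) (by decide) (by decide)
  have aq := hKK 0 2 3 (by decide) (by decide) (by decide)
  have cq := hKK 1 2 3 (by decide) (by decide) (by decide)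
  have bq := gen2 0 2 3 (by decide) (by decide) (by decide)
  have dq := gen2 1 2 3 (by decide) (by decide) (by decide)
  have ad := disj 0 2 1 3 (by decide) (by decide) (by decide) (by decide) (by decide) (by decide)
  have bc := disj 0 3 1 2 (by decide) (by decide) (by decide) (by decide) (by decide) (by decide)
  have hL : ⁅eσ 0 1, fσ 2 3⁆ = ((1 : ℂ)/4) •
      (K 0 2 - Complex.I • K 0 3 + Complex.I • K 1 2 + K 1 3) := by
    rw [heσ 0 1 (by decide), hfσ 2 3 (by decide), hKdef 0 2 (by decide), hKdef 0 3 (by decide),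
      hKdef 1 2 (by decide), hKdef 1 3 (by decide)]
    simp only [smul_lie, lie_smul, add_lie, lie_sub]
    match_scalars <;> ring_nf <;> simp <;> norm_num
  have hM : ⁅eσ 2 3, fσ 0 1⁆ = ((1 : ℂ)/4) •
      (-K 0 2 - Complex.I • K 0 3 + Complex.I • K 1 2 - K 1 3) := by
    rw [heσ 2 3 (by decide), hfσ 0 1 (by decide), hKskew 0 2 (by decide), hKskew 0 3 (by decide),
      hKskew 1 2 (by decide), hKskew 1 3 (by decide), hKdef 2 0 (by decide), hKdef 3 0 (by decide),
      hKdef 2 1 (by decide), hKdef 3 1 (by decide)]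
    simp only [smul_lie, lie_smul, add_lie, lie_sub]
    match_scalars <;> ring_nf <;> simp <;> norm_num
  rw [hL, hM]
  generalize K 0 2 = a at *
  generalize K 0 3 = b at *
  generalize K 1 2 = c at *
  generalize K 1 3 = d at *
  generalize K 0 1 = p at *
  generalize K 2 3 = q at *
  have sw : ∀ {x y z : L}, ⁅x, y⁆ = z → ⁅y, x⁆ = -z := by
    intro x y z hxy; rw [← hxy, lie_skew]
  have hH : ⁅((1 : ℂ)/4) • (a - Complex.I • b + Complex.I • c + d),
      ((1 : ℂ)/4) • (-a - Complex.I • b + Complex.I • c - d)⁆ = (Complex.I/2) • (q - p) := by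
    simp only [smul_lie, lie_smul, add_lie, lie_sub, sub_lie, lie_add, lie_neg, lie_self,
      ab, cd, ac, bd, ad, bc, sw ab, sw cd, sw ac, sw bd, sw ad, sw bc]
    match_scalars <;> ring_nf
  rw [hH]
  constructor
  all_goals
    simp only [smul_lie, lie_smul, add_lie, lie_sub, sub_lie, lie_add, lie_neg,
      pa, pb, pc, pd, sw aq, sw bq, sw cq, sw dq]
    match_scalars <;> ring_nf <;> simp <;> ring_nf
end

section
/- One has ⁅e_σ(3,4), f_σ(1,2)⁆ = (1/4) • (-(K 1 3 + K 2 4) - I • (K 1 4 - K 2 3)). -/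
/-- CONTEXT: Lie algebra over ℂ with sl₂-triples (e i, h, f i), i ∈ {1,2,3,4}
(encoded as Fin 4), the operators K i j := ⁅e i, f j⁆ satisfying the Verbitsky
relations, and the classes e_σ(i,j), f_σ(i,j), e_σ̄(i,j), f_σ̄(i,j). -/
theorem stmt5 {L : Type*} [LieRing L] [LieAlgebra ℂ L]
    (h : L) (e f : Fin 4 → L)
    (hhe : ∀ i, ⁅h, e i⁆ = (2 : ℂ) • e i)
    (hhf : ∀ i, ⁅h, f i⁆ = (-2 : ℂ) • f i)
    (hef : ∀ i, ⁅e i, f i⁆ = h)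
    (K : Fin 4 → Fin 4 → L)
    (hKdef : ∀ i j, i ≠ j → K i j = ⁅e i, f j⁆)
    (hKskew : ∀ i j, i ≠ j → K i j = -K j i)
    (hKK : ∀ i j k, i ≠ j → j ≠ k → i ≠ k → ⁅K i j, K j k⁆ = (2 : ℂ) • K i k)
    (hKh : ∀ i j, i ≠ j → ⁅K i j, h⁆ = 0)
    (hKe : ∀ i j, i ≠ j → ⁅K i j, e j⁆ = (2 : ℂ) • e i)
    (hKf : ∀ i j, i ≠ j → ⁅K i j, f j⁆ = (2 : ℂ) • f i)
    (hKe0 : ∀ i j k, i ≠ j → j ≠ k → i ≠ k → ⁅K i j, e k⁆ = 0)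
    (hKf0 : ∀ i j k, i ≠ j → j ≠ k → i ≠ k → ⁅K i j, f k⁆ = 0)
    (eσ fσ eσc fσc : Fin 4 → Fin 4 → L)
    (heσ : ∀ i j, i ≠ j → eσ i j = ((1 : ℂ)/2) • (e i + Complex.I • e j))
    (hfσ : ∀ i j, i ≠ j → fσ i j = ((1 : ℂ)/2) • (f i - Complex.I • f j))
    (heσc : ∀ i j, i ≠ j → eσc i j = ((1 : ℂ)/2) • (e i - Complex.I • e j))
    (hfσc : ∀ i j, i ≠ j → fσc i j = ((1 : ℂ)/2) • (f i + Complex.I • f j)) :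
    ⁅eσ 2 3, fσ 0 1⁆ = ((1 : ℂ)/4) • (-(K 0 2 + K 1 3) - Complex.I • (K 0 3 - K 1 2)) := by
  rw [heσ 2 3 (by decide), hfσ 0 1 (by decide), hKskew 0 2 (by decide), hKskew 1 3 (by decide),
    hKskew 0 3 (by decide), hKskew 1 2 (by decide), hKdef 2 0 (by decide), hKdef 3 1 (by decide),
    hKdef 3 0 (by decide), hKdef 2 1 (by decide)]
  simp only [lie_smul, smul_lie, add_lie, lie_sub]
  have hI : Complex.I * Complex.I = -1 := Complex.I_mul_I
  match_scalars <;> first | ring1 | linear_combination (-1/4 : ℂ) * hI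
end

section
/- Set L₀ := ⁅e_σ(1,2), f_σ(3,4)⁆ and Λ₀ := ⁅e_σ(3,4), f_σ(1,2)⁆. Then ⁅L₀, Λ₀⁆ = (-(I/2)) • (K 1 2 - K 3 4). -/
/-- CONTEXT: Lie algebra over ℂ with sl₂-triples (e i, h, f i), i ∈ {1,2,3,4}
(encoded as Fin 4), the operators K i j := ⁅e i, f j⁆ satisfying the Verbitsky
relations, and the classes e_σ(i,j), f_σ(i,j), e_σ̄(i,j), f_σ̄(i,j). -/
theorem stmt6 {L : Type*} [LieRing L] [LieAlgebra ℂ L]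
    (h : L) (e f : Fin 4 → L)
    (hhe : ∀ i, ⁅h, e i⁆ = (2 : ℂ) • e i)
    (hhf : ∀ i, ⁅h, f i⁆ = (-2 : ℂ) • f i)
    (hef : ∀ i, ⁅e i, f i⁆ = h)
    (K : Fin 4 → Fin 4 → L)
    (hKdef : ∀ i j, i ≠ j → K i j = ⁅e i, f j⁆)
    (hKskew : ∀ i j, i ≠ j → K i j = -K j i)
    (hKK : ∀ i j k, i ≠ j → j ≠ k → i ≠ k → ⁅K i j, K j k⁆ = (2 : ℂ) • K i k)
    (hKh : ∀ i j, i ≠ j → ⁅K i j, h⁆ = 0)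
    (hKe : ∀ i j, i ≠ j → ⁅K i j, e j⁆ = (2 : ℂ) • e i)
    (hKf : ∀ i j, i ≠ j → ⁅K i j, f j⁆ = (2 : ℂ) • f i)
    (hKe0 : ∀ i j k, i ≠ j → j ≠ k → i ≠ k → ⁅K i j, e k⁆ = 0)
    (hKf0 : ∀ i j k, i ≠ j → j ≠ k → i ≠ k → ⁅K i j, f k⁆ = 0)
    (eσ fσ eσc fσc : Fin 4 → Fin 4 → L)
    (heσ : ∀ i j, i ≠ j → eσ i j = ((1 : ℂ)/2) • (e i + Complex.I • e j))
    (hfσ : ∀ i j, i ≠ j → fσ i j = ((1 : ℂ)/2) • (f i - Complex.I • f j))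
    (heσc : ∀ i j, i ≠ j → eσc i j = ((1 : ℂ)/2) • (e i - Complex.I • e j))
    (hfσc : ∀ i j, i ≠ j → fσc i j = ((1 : ℂ)/2) • (f i + Complex.I • f j)) :
    ⁅⁅eσ 0 1, fσ 2 3⁆, ⁅eσ 2 3, fσ 0 1⁆⁆ = (-(Complex.I/2)) • (K 0 1 - K 2 3) := by
  have h1 : ⁅eσ 0 1, fσ 2 3⁆ =
      ((1 : ℂ)/4) • ((K 0 2 + K 1 3) + Complex.I • (K 1 2 - K 0 3)) := by
    rw [heσ 0 1 (by decide), hfσ 2 3 (by decide), hKdef 0 2 (by decide), hKdef 1 3 (by decide),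
      hKdef 1 2 (by decide), hKdef 0 3 (by decide)]
    simp only [lie_smul, smul_lie, add_lie, lie_sub]
    match_scalars <;> ring_nf <;> simp <;> norm_num
  have h2 : ⁅eσ 2 3, fσ 0 1⁆ =
      ((1 : ℂ)/4) • (-(K 0 2 + K 1 3) + Complex.I • (K 1 2 - K 0 3)) := by
    rw [heσ 2 3 (by decide), hfσ 0 1 (by decide), hKskew 0 2 (by decide), hKskew 1 3 (by decide),
      hKskew 1 2 (by decide), hKskew 0 3 (by decide), hKdef 2 0 (by decide),
      hKdef 3 1 (by decide), hKdef 2 1 (by decide), hKdef 3 0 (by decide)]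
    simp only [lie_smul, smul_lie, add_lie, lie_sub]
    match_scalars <;> ring_nf <;> simp <;> norm_num
  have a1 : ⁅K 0 2, K 1 2⁆ = (-2 : ℂ) • K 0 1 := by
    rw [hKskew 1 2 (by decide), lie_neg, hKK 0 2 1 (by decide) (by decide) (by decide), neg_smul]
  have a2 : ⁅K 0 2, K 0 3⁆ = (-2 : ℂ) • K 2 3 := by
    rw [hKskew 0 2 (by decide), neg_lie, hKK 2 0 3 (by decide) (by decide) (by decide), neg_smul]
  have a3 : ⁅K 1 3, K 1 2⁆ = (2 : ℂ) • K 2 3 := by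
    rw [hKskew 1 3 (by decide), neg_lie, hKK 3 1 2 (by decide) (by decide) (by decide),
      hKskew 2 3 (by decide), smul_neg]
  have a4 : ⁅K 1 3, K 0 3⁆ = (2 : ℂ) • K 0 1 := by
    rw [hKskew 0 3 (by decide), lie_neg, hKK 1 3 0 (by decide) (by decide) (by decide),
      hKskew 0 1 (by decide), smul_neg]
  have hXY : ⁅K 0 2 + K 1 3, K 1 2 - K 0 3⁆ = (-4 : ℂ) • (K 0 1 - K 2 3) := by
    rw [add_lie, lie_sub, lie_sub, a1, a2, a3, a4]
    module
  rw [h1, h2]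
  generalize K 0 2 + K 1 3 = X at *
  generalize K 1 2 - K 0 3 = Y at *
  have hYX : ⁅Y, X⁆ = (4 : ℂ) • (K 0 1 - K 2 3) := by
    rw [← lie_skew, hXY]; module
  simp only [lie_smul, smul_lie, add_lie, lie_add, lie_neg, lie_self, hXY, hYX]
  module
end

section
/- One has ⁅K 1 3 + K 2 4, K 1 4 - K 2 3⁆ = 4 • (K 1 2 - K 3 4). -/
/-- CONTEXT: Lie algebra over ℂ with sl₂-triples (e i, h, f i), i ∈ {1,2,3,4}
(encoded as Fin 4), and the operators K i j := ⁅e i, f j⁆ satisfying the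
Verbitsky relations. -/
theorem stmt9 {L : Type*} [LieRing L] [LieAlgebra ℂ L]
    (h : L) (e f : Fin 4 → L)
    (hhe : ∀ i, ⁅h, e i⁆ = (2 : ℂ) • e i)
    (hhf : ∀ i, ⁅h, f i⁆ = (-2 : ℂ) • f i)
    (hef : ∀ i, ⁅e i, f i⁆ = h)
    (K : Fin 4 → Fin 4 → L)
    (hKdef : ∀ i j, i ≠ j → K i j = ⁅e i, f j⁆)
    (hKskew : ∀ i j, i ≠ j → K i j = -K j i)
    (hKK : ∀ i j k, i ≠ j → j ≠ k → i ≠ k → ⁅K i j, K j k⁆ = (2 : ℂ) • K i k)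
    (hKh : ∀ i j, i ≠ j → ⁅K i j, h⁆ = 0)
    (hKe : ∀ i j, i ≠ j → ⁅K i j, e j⁆ = (2 : ℂ) • e i)
    (hKf : ∀ i j, i ≠ j → ⁅K i j, f j⁆ = (2 : ℂ) • f i)
    (hKe0 : ∀ i j k, i ≠ j → j ≠ k → i ≠ k → ⁅K i j, e k⁆ = 0)
    (hKf0 : ∀ i j k, i ≠ j → j ≠ k → i ≠ k → ⁅K i j, f k⁆ = 0) :
    ⁅K 0 2 + K 1 3, K 0 3 - K 1 2⁆ = (4 : ℂ) • (K 0 1 - K 2 3) := by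
  have a : ⁅K 0 2, K 0 3⁆ = -((2 : ℂ) • K 2 3) := by
    rw [hKskew 0 2 (by decide), neg_lie, hKK 2 0 3 (by decide) (by decide) (by decide)]
  have b : ⁅K 0 2, K 1 2⁆ = -((2 : ℂ) • K 0 1) := by
    rw [hKskew 1 2 (by decide), lie_neg, hKK 0 2 1 (by decide) (by decide) (by decide)]
  have c : ⁅K 1 3, K 0 3⁆ = (2 : ℂ) • K 0 1 := by
    rw [hKskew 0 3 (by decide), lie_neg, hKK 1 3 0 (by decide) (by decide) (by decide),
      hKskew 1 0 (by decide), smul_neg, neg_neg]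
  have d : ⁅K 1 3, K 1 2⁆ = (2 : ℂ) • K 2 3 := by
    rw [hKskew 1 3 (by decide), neg_lie, hKK 3 1 2 (by decide) (by decide) (by decide),
      hKskew 3 2 (by decide), smul_neg, neg_neg]
  rw [add_lie, lie_sub, lie_sub, a, b, c, d]
  module
end

section
/- For any three distinct indices i, j, k ∈ {1,2,3,4}, one has ⁅e_σ(j,k), ⁅f_σ(j,k), eᵢ⁆⁆ = eᵢ. -/
/-- CONTEXT: Lie algebra over ℂ with sl₂-triples (e i, h, f i), i ∈ {1,2,3,4}
(encoded as Fin 4), the operators K i j := ⁅e i, f j⁆ satisfying the Verbitsky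
relations, and the classes e_σ(i,j), f_σ(i,j), e_σ̄(i,j), f_σ̄(i,j). -/
theorem stmt10 {L : Type*} [LieRing L] [LieAlgebra ℂ L]
    (h : L) (e f : Fin 4 → L)
    (hhe : ∀ i, ⁅h, e i⁆ = (2 : ℂ) • e i)
    (hhf : ∀ i, ⁅h, f i⁆ = (-2 : ℂ) • f i)
    (hef : ∀ i, ⁅e i, f i⁆ = h)
    (K : Fin 4 → Fin 4 → L)
    (hKdef : ∀ i j, i ≠ j → K i j = ⁅e i, f j⁆)
    (hKskew : ∀ i j, i ≠ j → K i j = -K j i)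
    (hKK : ∀ i j k, i ≠ j → j ≠ k → i ≠ k → ⁅K i j, K j k⁆ = (2 : ℂ) • K i k)
    (hKh : ∀ i j, i ≠ j → ⁅K i j, h⁆ = 0)
    (hKe : ∀ i j, i ≠ j → ⁅K i j, e j⁆ = (2 : ℂ) • e i)
    (hKf : ∀ i j, i ≠ j → ⁅K i j, f j⁆ = (2 : ℂ) • f i)
    (hKe0 : ∀ i j k, i ≠ j → j ≠ k → i ≠ k → ⁅K i j, e k⁆ = 0)
    (hKf0 : ∀ i j k, i ≠ j → j ≠ k → i ≠ k → ⁅K i j, f k⁆ = 0)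
    (eσ fσ eσc fσc : Fin 4 → Fin 4 → L)
    (heσ : ∀ i j, i ≠ j → eσ i j = ((1 : ℂ)/2) • (e i + Complex.I • e j))
    (hfσ : ∀ i j, i ≠ j → fσ i j = ((1 : ℂ)/2) • (f i - Complex.I • f j))
    (heσc : ∀ i j, i ≠ j → eσc i j = ((1 : ℂ)/2) • (e i - Complex.I • e j))
    (hfσc : ∀ i j, i ≠ j → fσc i j = ((1 : ℂ)/2) • (f i + Complex.I • f j)) :
    ∀ i j k : Fin 4, i ≠ j → j ≠ k → i ≠ k →
      ⁅eσ j k, ⁅fσ j k, e i⁆⁆ = e i := by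
  intro i j k hij hjk hik
  have a1 : ⁅f j, e i⁆ = -K i j := by rw [hKdef i j hij, lie_skew]
  have a2 : ⁅f k, e i⁆ = -K i k := by rw [hKdef i k hik, lie_skew]
  have b1 : ⁅e j, K i j⁆ = -((2 : ℂ) • e i) := by rw [← hKe i j hij, lie_skew]
  have b2 : ⁅e k, K i k⁆ = -((2 : ℂ) • e i) := by rw [← hKe i k hik, lie_skew]
  have b3 : ⁅e k, K i j⁆ = 0 := by rw [← lie_skew, hKe0 i j k hij hjk hik, neg_zero]
  have b4 : ⁅e j, K i k⁆ = 0 := by rw [← lie_skew, hKe0 i k j hik hjk.symm hij, neg_zero]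
  rw [heσ j k hjk, hfσ j k hjk]
  simp only [smul_lie, lie_smul, add_lie, sub_lie, lie_sub, lie_neg, a1, a2, b1, b2, b3, b4]
  match_scalars
  linear_combination (-(1 : ℂ)/2) * Complex.I_sq
end

section
/- The elements p₀, …, p_{2g} are pairwise orthogonal idempotents: for all indices i, j ∈ {0, …, 2g}, pⱼ * pᵢ = 0 whenever j ≠ i, and pᵢ * pᵢ = pᵢ. -/
theorem aeval_mul_eig {A : Type*} [Ring A] [Algebra ℚ A] (h x : A) (c : ℚ)
    (hx : h * x = c • x) (f : Polynomial ℚ) :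
    Polynomial.aeval h f * x = (f.eval c) • x := by
  induction f using Polynomial.induction_on with
  | C a => simp [Algebra.smul_def]
  | add p q hp hq => simp [add_mul, add_smul, hp, hq]
  | monomial n a ih =>
    rw [pow_succ, ← mul_assoc, map_mul, Polynomial.aeval_X, mul_assoc, hx, mul_smul_comm, ih,
      smul_smul, Polynomial.eval_mul_X, mul_comm]

/-- CONTEXT: an associative unital algebra `A` over `ℚ`, elements `h₀` and
`p 0, …, p (2g)` with `∑ i, p i = 1` and `h₀ * p i = ((i : ℚ) - g) • p i`.
CONCLUSION: the `p i` are pairwise orthogonal idempotents. -/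
theorem stmt14 {A : Type*} [Ring A] [Algebra ℚ A] (g : ℕ)
    (h₀ : A) (p : Fin (2 * g + 1) → A)
    (hsum : ∑ i, p i = 1)
    (hp : ∀ i, h₀ * p i = (((i : ℕ) : ℚ) - (g : ℚ)) • p i) :
    (∀ i j, j ≠ i → p j * p i = 0) ∧ (∀ i, p i * p i = p i) := by
  let v : Fin (2 * g + 1) → ℚ := fun i => ((i : ℕ) : ℚ) - (g : ℚ)
  have hv : Function.Injective v := by
    intro i j hij
    have h : ((i : ℕ) : ℚ) = ((j : ℕ) : ℚ) := sub_left_injective hij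
    exact Fin.ext (by exact_mod_cast h)
  have hself : ∀ j, (Lagrange.basis Finset.univ v j).eval (v j) = 1 := fun j =>
    Lagrange.eval_basis_self hv.injOn (Finset.mem_univ j)
  have hne : ∀ i j, j ≠ i → (Lagrange.basis Finset.univ v j).eval (v i) = 0 := fun i j h =>
    Lagrange.eval_basis_of_ne h (Finset.mem_univ i)
  have key : ∀ i (f : Polynomial ℚ), Polynomial.aeval h₀ f * p i = (f.eval (v i)) • p i :=
    fun i f => aeval_mul_eig h₀ (p i) (v i) (hp i) f
  have hj : ∀ j, Polynomial.aeval h₀ (Lagrange.basis Finset.univ v j) = p j := by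
    intro j
    rw [← mul_one (Polynomial.aeval h₀ _), ← hsum, Finset.mul_sum,
      Finset.sum_eq_single j]
    · rw [key, hself, one_smul]
    · intro i _ hi
      rw [key, hne i j hi.symm, zero_smul]
    · simp
  constructor
  · intro i j h
    rw [← hj j, key, hne i j h, zero_smul]
  · intro i
    have := key i (Lagrange.basis Finset.univ v i)
    rwa [hself, one_smul, hj] at this
end
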